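/- arXiv:2504.00596 — 7 statements merged into one kernel-verified Lean document; each statement's English description precedes it below -/
import Mathlib

section
/- Let A be a nontrivial unital C*-algebra over ℂ, G a group, and (A_g)_{g∈G} a star-grading of A over G with ergodic identity component. Then for every g ∈ G and every nonzero a ∈ A_g there exists a unitary u of A with u ∈ A_g such that a = ‖a‖·u; in particular a*a = ‖a‖²·1 and a·a* = ‖a‖²·1. -/
/-!
For `a ∈ A_g` both `a* a` and `a a*` lie in `A_e = ℂ·1`. By associativity the two scalars agree,
so `a` is normal, and the C*-identity leaves only `a* a = ± ‖a‖²`. The negative sign would express a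
negative number as a sum of two squares of self-adjoint elements. To exclude this without spectral
theory, hence without completeness, note that commuting self-adjoint `x`, `y` satisfy
`‖x‖² ≤ ‖x² + y²‖`, since `x` is the real part of `x + iy`. For `R ≥ 0` this gives the bounds
`R ≤ ‖R + x²‖` and `‖R - y²‖² ≤ R² + ‖y‖⁴`, the latter from `(R - y²)² + 2Ry² = R² + y⁴`.
If `x² + y² = r < 0`, then `R - y² = (R - r) + x²`, so `(R - r)² ≤ R² + ‖y‖⁴`, which fails for
large `R`.
-/

theorem commute_of_mul_mem_span_one {K A : Type*} [Field K] [Ring A] [Algebra K A] {a b : A}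
    (hab : a * b ∈ Submodule.span K {(1 : A)}) (hba : b * a ∈ Submodule.span K {(1 : A)}) :
    Commute a b := by
  obtain ⟨c, hc⟩ := Submodule.mem_span_singleton.mp hab
  obtain ⟨d, hd⟩ := Submodule.mem_span_singleton.mp hba
  obtain rfl | ha := eq_or_ne a 0
  · exact Commute.zero_left b
  have h_smul : c • a = d • a := by
    calc c • a = a * b * a := by rw [← hc, smul_one_mul]
      _ = a * (b * a) := mul_assoc a b a
      _ = d • a := by rw [← hd, mul_smul_one]
  have hcd : c = d := smul_left_injective K ha h_smul
  exact hc.symm.trans (hcd ▸ hd)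

theorem inv_smul_mem_unitary {K A : Type*} [Field K] [StarRing K] [Ring A] [StarRing A]
    [Algebra K A] [StarModule K A] {a : A} [IsStarNormal a] {c : K} (hc : IsSelfAdjoint c)
    (hc_ne : c ≠ 0) (h : star a * a = c ^ 2 • (1 : A)) : c⁻¹ • a ∈ unitary A := by
  have h_star : star (c⁻¹ • a) = c⁻¹ • star a := by rw [star_smul, hc.inv₀.star_eq]
  have h_left : (c⁻¹ • star a) * (c⁻¹ • a) = 1 := by
    rw [smul_mul_smul_comm, h, smul_smul, ← sq, ← mul_pow, inv_mul_cancel₀ hc_ne, one_pow,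
      one_smul]
  have h_comm : Commute (c⁻¹ • star a) (c⁻¹ • a) :=
    ((IsStarNormal.star_comm_self (x := a)).smul_left c⁻¹).smul_right c⁻¹
  rw [Unitary.mem_iff, h_star]
  exact ⟨h_left, h_comm.eq.symm.trans h_left⟩

section PreCStarAlgebra

variable {A : Type*} [NormedRing A] [StarRing A] [CStarRing A] [NormedAlgebra ℂ A] [StarModule ℂ A]

theorem norm_sq_le_norm_sq_add_sq {x y : A} (hx : IsSelfAdjoint x) (hy : IsSelfAdjoint y)
    (hxy : Commute x y) : ‖x‖ ^ 2 ≤ ‖x ^ 2 + y ^ 2‖ := by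
  have h_star : star (x + Complex.I • y) = x - Complex.I • y := by
    simp [hx.star_eq, hy.star_eq, sub_eq_add_neg]
  have h_sq : star (x + Complex.I • y) * (x + Complex.I • y) = x ^ 2 + y ^ 2 := by
    rw [h_star, ← (hxy.smul_right Complex.I).mul_self_sub_mul_self_eq', smul_mul_smul_comm,
      Complex.I_mul_I, neg_one_smul, sub_neg_eq_add, sq, sq]
  have h_re : (realPart (x + Complex.I • y) : A) = x := by
    simp [hx.coe_realPart, hy.imaginaryPart]
  calc ‖x‖ ^ 2 ≤ ‖x + Complex.I • y‖ ^ 2 := by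
        gcongr
        simpa only [← AddSubgroup.norm_coe, h_re] using realPart.norm_le (x + Complex.I • y)
    _ = ‖x ^ 2 + y ^ 2‖ := by rw [← h_sq, CStarRing.norm_star_mul_self, sq]

theorem le_norm_algebraMap_add_sq [Nontrivial A] {x : A} (hx : IsSelfAdjoint x) {R : ℝ}
    (hR : 0 ≤ R) : R ≤ ‖algebraMap ℝ A R + x ^ 2‖ := by
  have h := norm_sq_le_norm_sq_add_sq (.algebraMap A (.all √R)) hx (Algebra.commutes √R x)
  rwa [← map_pow, norm_algebraMap', Real.norm_of_nonneg (Real.sqrt_nonneg R),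
    Real.sq_sqrt hR] at h

theorem norm_algebraMap_sub_sq_sq_le {y : A} (hy : IsSelfAdjoint y) {R : ℝ}
    (hR : 0 ≤ R) : ‖algebraMap ℝ A R - y ^ 2‖ ^ 2 ≤ R ^ 2 + ‖y‖ ^ 4 := by
  cases subsingleton_or_nontrivial A
  · rw [Subsingleton.elim (algebraMap ℝ A R - y ^ 2) 0, norm_zero, zero_pow two_ne_zero]
    positivity
  have h_comm : Commute (algebraMap ℝ A R - y ^ 2) (√(2 * R) • y) :=
    ((Algebra.commute_algebraMap_left R y).sub_left ((Commute.refl y).pow_left 2)).smul_right _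
  have h_expand : (algebraMap ℝ A R - y ^ 2) ^ 2 + (√(2 * R) • y) ^ 2
      = algebraMap ℝ A (R ^ 2) + y ^ 4 := by
    rw [smul_pow, Real.sq_sqrt (by positivity)]
    simp only [Algebra.algebraMap_eq_smul_one, sub_mul, mul_sub, smul_mul_assoc,
      mul_smul_comm, one_mul, mul_one, pow_succ, pow_zero, mul_assoc]
    module
  calc ‖algebraMap ℝ A R - y ^ 2‖ ^ 2
      ≤ ‖(algebraMap ℝ A R - y ^ 2) ^ 2 + (√(2 * R) • y) ^ 2‖ :=
        norm_sq_le_norm_sq_add_sq ((IsSelfAdjoint.algebraMap A (.all R)).sub (hy.pow 2))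
          (.smul (.all _) hy) h_comm
    _ = ‖algebraMap ℝ A (R ^ 2) + y ^ 4‖ := by rw [h_expand]
    _ ≤ ‖algebraMap ℝ A (R ^ 2)‖ + ‖y ^ 4‖ := norm_add_le _ _
    _ ≤ R ^ 2 + ‖y‖ ^ 4 := by
        rw [norm_algebraMap', Real.norm_of_nonneg (sq_nonneg R)]
        gcongr
        exact norm_pow_le y 4

theorem nonneg_of_sq_add_sq_eq_algebraMap [Nontrivial A] {x y : A} (hx : IsSelfAdjoint x)
    (hy : IsSelfAdjoint y) {r : ℝ} (h : x ^ 2 + y ^ 2 = algebraMap ℝ A r) : 0 ≤ r := by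
  by_contra! hr
  have h_bound (R : ℝ) (hR : 0 ≤ R) : (R - r) ^ 2 ≤ R ^ 2 + ‖y‖ ^ 4 := by
    have h_eq : algebraMap ℝ A R - y ^ 2 = algebraMap ℝ A (R - r) + x ^ 2 := by
      rw [map_sub, ← h]
      abel
    have h_nonneg : 0 ≤ R - r := by linarith
    calc (R - r) ^ 2 ≤ ‖algebraMap ℝ A (R - r) + x ^ 2‖ ^ 2 := by
          gcongr
          exact le_norm_algebraMap_add_sq hx h_nonneg
      _ = ‖algebraMap ℝ A R - y ^ 2‖ ^ 2 := by rw [h_eq]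
      _ ≤ R ^ 2 + ‖y‖ ^ 4 := norm_algebraMap_sub_sq_sq_le hy hR
  have h_contra := h_bound (‖y‖ ^ 4 / (-2 * r)) (div_nonneg (by positivity) (by linarith))
  have h_cancel : ‖y‖ ^ 4 / (-2 * r) * (-2 * r) = ‖y‖ ^ 4 :=
    div_mul_cancel₀ _ (by linarith : 0 < -2 * r).ne'
  nlinarith [sq_pos_of_neg hr]

theorem star_mul_self_eq_norm_sq_smul_one (a : A) [IsStarNormal a]
    (ha : star a * a ∈ Submodule.span ℂ {(1 : A)}) :
    star a * a = ((‖a‖ : ℂ) ^ 2) • (1 : A) := by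
  nontriviality A
  obtain ⟨c, hc⟩ := Submodule.mem_span_singleton.mp ha
  rw [← Algebra.algebraMap_eq_smul_one] at hc
  have hc_real : IsSelfAdjoint c := by
    rw [← isSelfAdjoint_algebraMap_iff (FaithfulSMul.algebraMap_injective ℂ A), hc]
    exact .star_mul_self a
  obtain ⟨r, rfl⟩ := Complex.conj_eq_iff_real.mp hc_real
  have h_real : star a * a = algebraMap ℝ A r := hc.symm
  have hr_nonneg : 0 ≤ r :=
    nonneg_of_sq_add_sq_eq_algebraMap (realPart a).2 (imaginaryPart a).2
      (by rw [sq, sq, ← star_mul_self_eq_realPart_sq_add_imaginaryPart_sq, h_real])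
  have hr_norm : r = ‖a‖ ^ 2 := by
    rw [sq, ← CStarRing.norm_star_mul_self, h_real, norm_algebraMap', Real.norm_of_nonneg hr_nonneg]
  rw [← hc, hr_norm, Complex.ofReal_pow, Algebra.algebraMap_eq_smul_one]

end PreCStarAlgebra

theorem stmt0_general {A : Type*} [NormedRing A] [StarRing A] [CStarRing A]
    [NormedAlgebra ℂ A] [StarModule ℂ A]
    {G : Type*} [Group G]
    (Ag : G → Submodule ℂ A)
    (h_one : Ag 1 = Submodule.span ℂ {(1 : A)})
    (h_mul : ∀ g h : G, ∀ x y : A, x ∈ Ag g → y ∈ Ag h → x * y ∈ Ag (g * h))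
    (h_star : ∀ g : G, ∀ x : A, x ∈ Ag g → star x ∈ Ag g⁻¹) :
    ∀ g : G, ∀ a : A, a ∈ Ag g → a ≠ 0 →
      ∃ u : A, u ∈ unitary A ∧ u ∈ Ag g ∧ a = (‖a‖ : ℂ) • u ∧
        star a * a = ((‖a‖ : ℂ) ^ 2) • (1 : A) ∧
        a * star a = ((‖a‖ : ℂ) ^ 2) • (1 : A) := by
  intro g a ha ha_ne
  have h_left : star a * a ∈ Submodule.span ℂ {(1 : A)} := by
    simpa only [inv_mul_cancel, h_one] using h_mul g⁻¹ g (star a) a (h_star g a ha) ha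
  have h_right : a * star a ∈ Submodule.span ℂ {(1 : A)} := by
    simpa only [mul_inv_cancel, h_one] using h_mul g g⁻¹ a (star a) ha (h_star g a ha)
  have : IsStarNormal a := ⟨commute_of_mul_mem_span_one h_left h_right⟩
  have h_star_mul : star a * a = ((‖a‖ : ℂ) ^ 2) • (1 : A) :=
    star_mul_self_eq_norm_sq_smul_one a h_left
  have h_norm : (‖a‖ : ℂ) ≠ 0 := Complex.ofReal_ne_zero.mpr (norm_ne_zero_iff.mpr ha_ne)
  exact ⟨(‖a‖ : ℂ)⁻¹ • a, inv_smul_mem_unitary (Complex.conj_ofReal ‖a‖) h_norm h_star_mul,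
    (Ag g).smul_mem _ ha, (smul_inv_smul₀ h_norm a).symm, h_star_mul,
    (star_comm_self' a).symm.trans h_star_mul⟩

/-- Let `A` be a nontrivial unital C*-algebra over `ℂ`, `G` a group, and
`(Ag g)_{g ∈ G}` a star-grading of `A` over `G` with ergodic identity component, i.e.
`Ag 1 = ℂ·1`, `Ag g * Ag h ⊆ Ag (g*h)` and `(Ag g)* ⊆ Ag g⁻¹`.  Then every nonzero
`a ∈ Ag g` is a positive multiple of a unitary `u ∈ Ag g`, namely `a = ‖a‖ • u`; in
particular `a* a = ‖a‖² • 1` and `a a* = ‖a‖² • 1`. -/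
theorem stmt0 {A : Type*} [NormedRing A] [StarRing A] [CStarRing A]
    [NormedAlgebra ℂ A] [StarModule ℂ A] [CompleteSpace A] [Nontrivial A]
    {G : Type*} [Group G]
    (Ag : G → Submodule ℂ A)
    (h_one : Ag 1 = Submodule.span ℂ {(1 : A)})
    (h_mul : ∀ g h : G, ∀ x y : A, x ∈ Ag g → y ∈ Ag h → x * y ∈ Ag (g * h))
    (h_star : ∀ g : G, ∀ x : A, x ∈ Ag g → star x ∈ Ag g⁻¹) :
    ∀ g : G, ∀ a : A, a ∈ Ag g → a ≠ 0 →
      ∃ u : A, u ∈ unitary A ∧ u ∈ Ag g ∧ a = (‖a‖ : ℂ) • u ∧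
        star a * a = ((‖a‖ : ℂ) ^ 2) • (1 : A) ∧
        a * star a = ((‖a‖ : ℂ) ^ 2) • (1 : A) :=
  stmt0_general Ag h_one h_mul h_star
end

section
/- Let A be a nontrivial unital C*-algebra over ℂ, G a group, and (A_g)_{g∈G} a star-grading of A over G with ergodic identity component. Then for every g ∈ G the subspace A_g has ℂ-dimension at most 1. -/
/-!
If `x ≠ 0` is homogeneous of degree `g`, then `x * star x` lies in the identity component, so it is
a scalar `c`, and it is nonzero because the involution is proper. For any other `y` of degree `g`
the product `star x * y` is also a scalar `a`, and reassociating `x * star x * y` in two ways gives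
`c • y = a • x`.
-/

section

variable {K A : Type*} [Field K] [Ring A] [Algebra K A]

theorem mem_span_singleton_of_mul_mem_one {x y z : A} (hxz : x * z ∈ (1 : Submodule K A))
    (hxz_ne : x * z ≠ 0) (hzy : z * y ∈ (1 : Submodule K A)) : y ∈ Submodule.span K {x} := by
  obtain ⟨c, hc⟩ := Submodule.mem_one.1 hxz
  obtain ⟨a, ha⟩ := Submodule.mem_one.1 hzy
  have hc_ne : c ≠ 0 := by
    rintro rfl
    exact hxz_ne (by rw [← hc, map_zero])
  have hcy : c • y = a • x :=
    calc c • y = x * z * y := by rw [Algebra.smul_def, hc]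
      _ = x * (z * y) := mul_assoc x z y
      _ = a • x := by rw [← ha, ← Algebra.commutes, ← Algebra.smul_def]
  rw [← Submodule.smul_mem_iff _ hc_ne, hcy]
  exact Submodule.smul_mem _ a (Submodule.mem_span_singleton_self x)

theorem rank_le_one_of_mul_le_one {V W : Submodule K A} (hVW : V * W ≤ 1) (hWV : W * V ≤ 1)
    (hV : ∀ x ∈ V, x ≠ 0 → ∃ z ∈ W, x * z ≠ 0) : Module.rank K V ≤ 1 := by
  rcases eq_or_ne V ⊥ with rfl | hV_ne
  · rw [rank_bot]
    exact zero_le_one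
  · obtain ⟨x, hx, hx_ne⟩ := Submodule.exists_mem_ne_zero_of_ne_bot hV_ne
    obtain ⟨z, hz, hxz_ne⟩ := hV x hx hx_ne
    exact (rank_submodule_le_one_iff' V).2 ⟨x, fun y hy ↦ mem_span_singleton_of_mul_mem_one
      (hVW (Submodule.mul_mem_mul hx hz)) hxz_ne (hWV (Submodule.mul_mem_mul hz hy))⟩

theorem stmt1_general [Star A] (h_proper : ∀ x : A, x * star x = 0 → x = 0)
    {G : Type*} [Group G] (Ag : G → Submodule K A) (h_one : Ag 1 ≤ 1)
    (h_mul : ∀ g h : G, ∀ x y : A, x ∈ Ag g → y ∈ Ag h → x * y ∈ Ag (g * h))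
    (h_star : ∀ g : G, ∀ x : A, x ∈ Ag g → star x ∈ Ag g⁻¹) (g : G) :
    Module.rank K (Ag g) ≤ 1 := by
  have mul_le_one {a b : G} (hab : a * b = 1) : Ag a * Ag b ≤ 1 :=
    Submodule.mul_le.2 fun x hx y hy ↦ h_one (hab ▸ h_mul a b x y hx hy)
  exact rank_le_one_of_mul_le_one (mul_le_one (mul_inv_cancel g)) (mul_le_one (inv_mul_cancel g))
    fun x hx hx_ne ↦ ⟨star x, h_star g x hx, mt (h_proper x) hx_ne⟩

end

/-- Let `A` be a nontrivial unital C*-algebra over `ℂ`, `G` a group, and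
`(Ag g)_{g ∈ G}` a star-grading of `A` over `G` with ergodic identity component.  Then each
spectral subspace `Ag g` has `ℂ`-dimension at most `1`. -/
theorem stmt1 {A : Type*} [NormedRing A] [StarRing A] [CStarRing A]
    [NormedAlgebra ℂ A] [StarModule ℂ A] [CompleteSpace A] [Nontrivial A]
    {G : Type*} [Group G]
    (Ag : G → Submodule ℂ A)
    (h_one : Ag 1 = Submodule.span ℂ {(1 : A)})
    (h_mul : ∀ g h : G, ∀ x y : A, x ∈ Ag g → y ∈ Ag h → x * y ∈ Ag (g * h))
    (h_star : ∀ g : G, ∀ x : A, x ∈ Ag g → star x ∈ Ag g⁻¹) :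
    ∀ g : G, Module.rank ℂ ↥(Ag g) ≤ 1 := by
  exact stmt1_general (fun x ↦ (CStarRing.mul_star_self_eq_zero_iff x).1) Ag
    (h_one.trans Submodule.one_eq_span.symm).le h_mul h_star
end

section
/- Let A be a nontrivial unital C*-algebra over ℂ, G a group, and (A_g)_{g∈G} a star-grading of A over G with ergodic identity component. Then the support S = {g ∈ G : A_g ≠ {0}} is a subgroup of G: it contains the identity element, and it is closed under products and under inverses. -/
/-! If `x` is homogeneous of degree `g`, then `star x * x` has degree `1`. In the ergodic case this
is a scalar, and it is nonzero if `x` is, because `‖star x * x‖ = ‖x‖ ^ 2`. Hence a nonzero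
homogeneous element is left regular, and the product of two nonzero homogeneous elements does not
vanish. -/

/-- A family `𝒜` of submodules of a star ring `A`, indexed by a group, that is compatible with the
unit, the product and the involution: the elements of `𝒜 g` play the role of homogeneous
elements of degree `g`, but the `𝒜 g` need neither be independent nor span `A`. -/
structure IsStarGrading {R A G : Type*} [Semiring R] [Semiring A] [StarRing A] [Module R A]
    [Group G] (𝒜 : G → Submodule R A) : Prop where
  one_mem : 1 ∈ 𝒜 1
  mul_mem : ∀ g h : G, ∀ x y : A, x ∈ 𝒜 g → y ∈ 𝒜 h → x * y ∈ 𝒜 (g * h)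
  star_mem : ∀ g : G, ∀ x : A, x ∈ 𝒜 g → star x ∈ 𝒜 g⁻¹

theorem isLeftRegular_of_mem_span_one {R A : Type*} [Semiring R] [IsCancelMulZero R]
    [Semiring A] [Module R A] [Module.IsTorsionFree R A] [IsScalarTower R A A] {a : A}
    (ha : a ∈ Submodule.span R {(1 : A)}) (ha0 : a ≠ 0) : IsLeftRegular a := by
  obtain ⟨c, rfl⟩ := Submodule.mem_span_singleton.mp ha
  have hc : c ≠ 0 := fun hc => ha0 (by rw [hc, zero_smul])
  intro y z hyz
  exact smul_right_injective A hc (by simpa only [smul_one_mul] using hyz)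

namespace IsStarGrading

variable {R A G : Type*} [Semiring R] [Semiring A] [StarRing A] [Module R A] [Group G]
  {𝒜 : G → Submodule R A} {g h : G} {x : A}

theorem star_mul_self_mem (h𝒜 : IsStarGrading 𝒜) (hx : x ∈ 𝒜 g) : star x * x ∈ 𝒜 1 := by
  simpa only [inv_mul_cancel] using h𝒜.mul_mem g⁻¹ g (star x) x (h𝒜.star_mem g x hx) hx

theorem isLeftRegular_of_mem (h𝒜 : IsStarGrading 𝒜)
    (h_regular : ∀ a ∈ 𝒜 1, a ≠ 0 → IsLeftRegular a)
    (h_proper : ∀ a : A, star a * a = 0 → a = 0) (hx : x ∈ 𝒜 g) (hx0 : x ≠ 0) :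
    IsLeftRegular x :=
  (h_regular _ (h𝒜.star_mul_self_mem hx) (mt (h_proper x) hx0)).of_mul

theorem one_ne_bot [Nontrivial A] (h𝒜 : IsStarGrading 𝒜) : 𝒜 1 ≠ ⊥ :=
  (Submodule.ne_bot_iff _).mpr ⟨1, h𝒜.one_mem, one_ne_zero⟩

theorem mul_ne_bot (h𝒜 : IsStarGrading 𝒜)
    (h_regular : ∀ a ∈ 𝒜 1, a ≠ 0 → IsLeftRegular a)
    (h_proper : ∀ a : A, star a * a = 0 → a = 0) (hg : 𝒜 g ≠ ⊥) (hh : 𝒜 h ≠ ⊥) :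
    𝒜 (g * h) ≠ ⊥ := by
  obtain ⟨x, hx, hx0⟩ := Submodule.exists_mem_ne_zero_of_ne_bot hg
  obtain ⟨y, hy, hy0⟩ := Submodule.exists_mem_ne_zero_of_ne_bot hh
  have hxy0 : x * y ≠ 0 :=
    mt (h𝒜.isLeftRegular_of_mem h_regular h_proper hx hx0).mul_left_eq_zero_iff.mp hy0
  exact (Submodule.ne_bot_iff _).mpr ⟨x * y, h𝒜.mul_mem g h x y hx hy, hxy0⟩

theorem inv_ne_bot (h𝒜 : IsStarGrading 𝒜) (hg : 𝒜 g ≠ ⊥) : 𝒜 g⁻¹ ≠ ⊥ := by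
  obtain ⟨x, hx, hx0⟩ := Submodule.exists_mem_ne_zero_of_ne_bot hg
  exact (Submodule.ne_bot_iff _).mpr ⟨star x, h𝒜.star_mem g x hx, star_ne_zero.mpr hx0⟩

end IsStarGrading

theorem stmt2_general {R A G : Type*} [Semiring R] [Semiring A] [Nontrivial A] [StarRing A]
    [Module R A] [Group G] {𝒜 : G → Submodule R A} (h𝒜 : IsStarGrading 𝒜)
    (h_regular : ∀ a ∈ 𝒜 1, a ≠ 0 → IsLeftRegular a)
    (h_proper : ∀ a : A, star a * a = 0 → a = 0) :
    𝒜 1 ≠ ⊥ ∧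
    (∀ g h : G, 𝒜 g ≠ ⊥ → 𝒜 h ≠ ⊥ → 𝒜 (g * h) ≠ ⊥) ∧
    (∀ g : G, 𝒜 g ≠ ⊥ → 𝒜 g⁻¹ ≠ ⊥) :=
  ⟨h𝒜.one_ne_bot, fun _ _ => h𝒜.mul_ne_bot h_regular h_proper, fun _ => h𝒜.inv_ne_bot⟩

/-- Let `A` be a nontrivial unital C*-algebra over `ℂ`, `G` a group, and
`(Ag g)_{g ∈ G}` a star-grading of `A` over `G` with ergodic identity component.  Then the
support `S = {g : Ag g ≠ 0}` is a subgroup of `G`: it contains the identity and is closed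
under products and inverses. -/
theorem stmt2 {A : Type*} [NormedRing A] [StarRing A] [CStarRing A]
    [NormedAlgebra ℂ A] [StarModule ℂ A] [CompleteSpace A] [Nontrivial A]
    {G : Type*} [Group G]
    (Ag : G → Submodule ℂ A)
    (h_one : Ag 1 = Submodule.span ℂ {(1 : A)})
    (h_mul : ∀ g h : G, ∀ x y : A, x ∈ Ag g → y ∈ Ag h → x * y ∈ Ag (g * h))
    (h_star : ∀ g : G, ∀ x : A, x ∈ Ag g → star x ∈ Ag g⁻¹) :
    Ag 1 ≠ ⊥ ∧
    (∀ g h : G, Ag g ≠ ⊥ → Ag h ≠ ⊥ → Ag (g * h) ≠ ⊥) ∧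
    (∀ g : G, Ag g ≠ ⊥ → Ag g⁻¹ ≠ ⊥) := by
  have h_one_mem : 1 ∈ Ag 1 := h_one ▸ Submodule.mem_span_singleton_self 1
  exact stmt2_general ⟨h_one_mem, h_mul, h_star⟩
    (fun a ha => isLeftRegular_of_mem_span_one (h_one ▸ ha))
    (fun a => (CStarRing.star_mul_self_eq_zero_iff a).mp)
end

section
/- Let p be a prime number and let A be a nontrivial unital C*-algebra over ℂ that is finite-dimensional as a ℂ-vector space, equipped with an internal star-grading (A_k)_{k ∈ ℤ/pℤ} over the cyclic group ℤ/pℤ with ergodic identity component. Then dim_ℂ A = 1 or dim_ℂ A = p. -/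
/-!
If `x ≠ 0` lies in `𝒜 g`, then `x * star x` is a nonzero element of `𝒜 0 = ℂ ∙ 1` by the
C⋆-identity, so `x` is invertible with inverse in `𝒜 (-g)`. Hence the degrees `g` with `𝒜 g ≠ ⊥`
form a subgroup `H`, and multiplication by `x` carries the line `𝒜 0` onto `𝒜 g`. Thus `A` has a
basis indexed by `H`, and `dim A = |H|` divides the order of the grading group.
-/

open Module

theorem exists_basis_mem_of_isInternal {R M ι : Type*} [Ring R] [IsDomain R] [AddCommGroup M]
    [Module R M] [IsTorsionFree R M] [DecidableEq ι] {ℳ : ι → Submodule R M}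
    (hℳ : DirectSum.IsInternal ℳ) (hline : ∀ i, ∀ x ∈ ℳ i, x ≠ 0 → ℳ i = R ∙ x) :
    ∃ b : Basis {i // ℳ i ≠ ⊥} R M, ∀ i : {i // ℳ i ≠ ⊥}, b i ∈ ℳ i := by
  have hne := DirectSum.isInternal_ne_bot_iff.mpr hℳ
  choose x hx hx0 using fun i : {i // ℳ i ≠ ⊥} => Submodule.exists_mem_ne_zero_of_ne_bot i.2
  have hli : LinearIndependent R x := hne.submodule_iSupIndep.linearIndependent _ hx hx0
  have hspan : ⊤ ≤ Submodule.span R (Set.range x) := by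
    rw [← hne.submodule_iSup_eq_top, Submodule.span_range_eq_iSup]
    exact iSup_mono fun i => (hline i (x i) (hx i) (hx0 i)).le
  exact ⟨Basis.mk hli hspan, fun i => by simpa only [Basis.mk_apply] using hx i⟩

section Semiring

variable {K A G : Type*} [CommSemiring K] [Semiring A] [Algebra K A] [AddGroup G]
  {𝒜 : G → Submodule K A}

/-- The grading `𝒜` makes `A` a graded division algebra: every nonzero homogeneous element has a
homogeneous inverse. Only right inverses are required; they are two-sided, since a nonzero right
inverse is itself homogeneous and so has a right inverse. -/
def IsGradedDivision (𝒜 : G → Submodule K A) : Prop :=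
  ∀ ⦃g x⦄, x ∈ 𝒜 g → x ≠ 0 → ∃ y ∈ 𝒜 (-g), x * y = 1

theorem map_mulLeft_zero_eq [SetLike.GradedMul 𝒜] {g : G} {x y : A} (hx : x ∈ 𝒜 g)
    (hy : y ∈ 𝒜 (-g)) (hxy : x * y = 1) : (𝒜 0).map (LinearMap.mulLeft K x) = 𝒜 g := by
  apply le_antisymm
  · rintro _ ⟨z, hz, rfl⟩
    simpa only [LinearMap.mulLeft_apply, add_zero] using SetLike.mul_mem_graded hx hz
  · intro z hz
    have hyz : y * z ∈ 𝒜 0 := by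
      simpa only [neg_add_cancel] using SetLike.mul_mem_graded hy hz
    exact ⟨y * z, hyz, by rw [LinearMap.mulLeft_apply, ← mul_assoc, hxy, one_mul]⟩

namespace IsGradedDivision

theorem mul_ne_zero (h : IsGradedDivision 𝒜) {g : G} {x y : A} (hx0 : x ≠ 0) (hy : y ∈ 𝒜 g)
    (hy0 : y ≠ 0) : x * y ≠ 0 := by
  obtain ⟨z, -, hyz⟩ := h hy hy0
  intro hxy
  exact hx0 <| by rw [← mul_one x, ← hyz, ← mul_assoc, hxy, zero_mul]

/-- The support of a graded division algebra: the subgroup of the degrees whose homogeneous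
component is nonzero. -/
def support [Nontrivial A] [SetLike.GradedMonoid 𝒜] (h : IsGradedDivision 𝒜) : AddSubgroup G where
  carrier := {g | 𝒜 g ≠ ⊥}
  zero_mem' := (Submodule.ne_bot_iff _).mpr ⟨1, SetLike.one_mem_graded 𝒜, one_ne_zero⟩
  add_mem' {g k} hg hk := by
    obtain ⟨x, hx, hx0⟩ := Submodule.exists_mem_ne_zero_of_ne_bot hg
    obtain ⟨y, hy, hy0⟩ := Submodule.exists_mem_ne_zero_of_ne_bot hk
    exact (Submodule.ne_bot_iff _).mpr
      ⟨x * y, SetLike.mul_mem_graded hx hy, h.mul_ne_zero hx0 hy hy0⟩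
  neg_mem' {g} hg := by
    obtain ⟨x, hx, hx0⟩ := Submodule.exists_mem_ne_zero_of_ne_bot hg
    obtain ⟨y, hy, hxy⟩ := h hx hx0
    exact (Submodule.ne_bot_iff _).mpr ⟨y, hy, right_ne_zero_of_mul_eq_one hxy⟩

theorem eq_span_singleton [SetLike.GradedMul 𝒜] (h : IsGradedDivision 𝒜)
    (h_zero : 𝒜 0 = K ∙ (1 : A)) {g : G} {x : A} (hx : x ∈ 𝒜 g) (hx0 : x ≠ 0) :
    𝒜 g = K ∙ x := by
  obtain ⟨y, hy, hxy⟩ := h hx hx0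
  rw [← map_mulLeft_zero_eq hx hy hxy, h_zero, Submodule.map_span, Set.image_singleton,
    LinearMap.mulLeft_apply, mul_one]

end IsGradedDivision

end Semiring

section Field

variable {K A G : Type*} [Field K] [Ring A] [Algebra K A] [AddGroup G] {𝒜 : G → Submodule K A}

theorem isGradedDivision_of_exists_mul_ne_zero [SetLike.GradedMul 𝒜]
    (h_zero : 𝒜 0 ≤ K ∙ (1 : A))
    (h_nondeg : ∀ g, ∀ x ∈ 𝒜 g, x ≠ 0 → ∃ y ∈ 𝒜 (-g), x * y ≠ 0) : IsGradedDivision 𝒜 := by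
  intro g x hx hx0
  obtain ⟨y, hy, hxy⟩ := h_nondeg g x hx hx0
  have hmem : x * y ∈ 𝒜 0 := by
    simpa only [add_neg_cancel] using SetLike.mul_mem_graded hx hy
  obtain ⟨c, hc⟩ := Submodule.mem_span_singleton.mp (h_zero hmem)
  have hc0 : c ≠ 0 := by
    rintro rfl
    exact hxy (by rw [← hc, zero_smul])
  exact ⟨c⁻¹ • y, Submodule.smul_mem _ _ hy, by rw [mul_smul_comm, ← hc, inv_smul_smul₀ hc0]⟩

theorem stmt3_general [Nontrivial A] [DecidableEq G] (h_internal : DirectSum.IsInternal 𝒜)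
    (h_zero : 𝒜 0 = K ∙ (1 : A))
    (h_mul : ∀ g k : G, ∀ x y : A, x ∈ 𝒜 g → y ∈ 𝒜 k → x * y ∈ 𝒜 (g + k))
    (h_nondeg : ∀ g, ∀ x ∈ 𝒜 g, x ≠ 0 → ∃ y ∈ 𝒜 (-g), x * y ≠ 0) :
    ∃ (H : AddSubgroup G) (b : Basis H K A), ∀ g : H, b g ∈ 𝒜 g := by
  have : SetLike.GradedMonoid 𝒜 :=
    { one_mem := h_zero ▸ Submodule.mem_span_singleton_self 1
      mul_mem := fun g k x y => h_mul g k x y }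
  have h : IsGradedDivision 𝒜 := isGradedDivision_of_exists_mul_ne_zero h_zero.le h_nondeg
  exact ⟨h.support,
    exists_basis_mem_of_isInternal h_internal fun _ _ hx hx0 => h.eq_span_singleton h_zero hx hx0⟩

end Field

/-- Let `p` be a prime and `A` a nontrivial finite-dimensional unital
C*-algebra over `ℂ`, equipped with an internal star-grading `(Ag k)_{k ∈ ℤ/pℤ}` over the
cyclic group `ℤ/pℤ` with ergodic identity component.  Then `dim_ℂ A = 1` or `dim_ℂ A = p`. -/
theorem stmt3 {A : Type*} [NormedRing A] [StarRing A] [CStarRing A]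
    [NormedAlgebra ℂ A] [StarModule ℂ A] [CompleteSpace A] [Nontrivial A]
    [FiniteDimensional ℂ A]
    (p : ℕ) (hp : p.Prime)
    (Ag : ZMod p → Submodule ℂ A)
    (h_internal : DirectSum.IsInternal Ag)
    (h_zero : Ag 0 = Submodule.span ℂ {(1 : A)})
    (h_mul : ∀ j k : ZMod p, ∀ x y : A, x ∈ Ag j → y ∈ Ag k → x * y ∈ Ag (j + k))
    (h_star : ∀ k : ZMod p, ∀ x : A, x ∈ Ag k → star x ∈ Ag (-k)) :
    Module.finrank ℂ A = 1 ∨ Module.finrank ℂ A = p := by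
  obtain ⟨H, b, -⟩ := stmt3_general h_internal h_zero h_mul fun k x hx hx0 =>
    ⟨star x, h_star k x hx, (CStarRing.mul_star_self_ne_zero_iff x).mpr hx0⟩
  exact (Nat.dvd_prime hp).mp <| by
    simpa only [finrank_eq_nat_card_basis b, Nat.card_zmod] using H.card_addSubgroup_dvd_card
end

section
/- Let p be a prime number and let A be a nontrivial unital C*-algebra over ℂ, finite-dimensional over ℂ, equipped with an internal star-grading (A_k)_{k ∈ ℤ/pℤ} over ℤ/pℤ with ergodic identity component, and suppose A_k ≠ {0} for some k ≠ 0. Then there exists a unitary u of A with u ∈ A_1 such that u^p = 1 and, for every k ∈ ℤ/pℤ, A_k = ℂ·u^k (where u^k denotes u raised to any representative of k, well defined since u^p = 1). In particular A is commutative of ℂ-dimension p, with basis 1, u, …, u^{p−1}. -/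
/-!
A nonzero `x ∈ A_g` satisfies `x* x = c · 1`, and `xⁿ = a · 1` when `n g = 0`, because both
products lie in `A_0`. If `x y = ζ y` with `y ≠ 0`, then `xⁿ y = ζⁿ y` gives `a = ζⁿ`, and
`(x y)* (x y) = c y* y` gives `c = ζ̄ ζ`, so `u = ζ⁻¹ x` is a unitary with `uⁿ = 1`: dividing by an
eigenvalue normalises both relations at once, without positivity or square roots. Multiplication by
a unitary in `A_g` identifies `A_0` with `A_g`, so the powers of a unitary in `A_1` span `A`.
-/

section Eigenvalue

open Polynomial

theorem exists_hasEigenvalue_of_isIntegral {K V : Type*} [Field K] [IsAlgClosed K]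
    [AddCommGroup V] [Module K V] [Nontrivial V] {f : Module.End K V} (hf : IsIntegral K f) :
    ∃ ζ : K, f.HasEigenvalue ζ := by
  obtain ⟨ζ, hζ⟩ := IsAlgClosed.exists_root (minpoly K f) (minpoly.degree_pos hf).ne'
  obtain ⟨q, hq⟩ := dvd_iff_isRoot.mpr hζ
  have q_monic : q.Monic := (monic_X_sub_C ζ).of_mul_monic_left (hq ▸ minpoly.monic hf)
  have hqf : aeval f q ≠ 0 :=
    minpoly.aeval_ne_zero_of_dvdNotUnit_minpoly hf q_monic
      ⟨q_monic.ne_zero, X - C ζ, not_isUnit_X_sub_C ζ, by rw [hq, mul_comm]⟩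
  obtain ⟨v, hv⟩ : ∃ v, aeval f q v ≠ 0 := by
    contrapose! hqf
    exact LinearMap.ext hqf
  have mem_eigenspace : aeval f q v ∈ f.eigenspace ζ := by
    simpa [sub_eq_zero, hq] using LinearMap.congr_fun (minpoly.aeval K f) v
  exact ⟨ζ, Module.End.hasEigenvalue_of_hasEigenvector ⟨mem_eigenspace, hv⟩⟩

theorem isIntegral_of_pow_eq_smul_one {R A : Type*} [CommRing R] [Ring A] [Algebra R A]
    {x : A} {n : ℕ} (hn : 0 < n) {a : R} (hx : x ^ n = a • 1) : IsIntegral R x :=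
  .of_pow hn (by rw [hx, ← Algebra.algebraMap_eq_smul_one]; exact isIntegral_algebraMap)

theorem eq_pow_of_hasEigenvalue {K A : Type*} [Field K] [Ring A] [Algebra K A] {x : A} {a ζ : K}
    {n : ℕ} (hx : x ^ n = a • 1) (hζ : (Algebra.lmul K A x).HasEigenvalue ζ) : a = ζ ^ n := by
  obtain ⟨y, hy⟩ := hζ.exists_hasEigenvector
  refine smul_left_injective K hy.2 ?_
  calc a • y = (Algebra.lmul K A x ^ n) y := by rw [← map_pow, hx]; simp
    _ = ζ ^ n • y := hy.pow_apply n

end Eigenvalue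

section ProperInvolution

/-- An involution is proper if `star x * x = 0` forces `x = 0`. It stands in for the C*-identity,
of which it is the purely algebraic part. -/
def ProperInvolution (A : Type*) [NonUnitalNonAssocSemiring A] [Star A] : Prop :=
  ∀ x : A, star x * x = 0 → x = 0

theorem properInvolution_of_cstarRing (A : Type*) [NonUnitalNormedRing A] [StarRing A]
    [CStarRing A] : ProperInvolution A :=
  fun x => (CStarRing.star_mul_self_eq_zero_iff x).1

variable {K A : Type*} [Field K] [StarRing K] [Ring A] [StarRing A] [Algebra K A] [StarModule K A]

theorem ProperInvolution.eq_star_mul_self_of_hasEigenvalue (hA : ProperInvolution A) {x : A}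
    {c ζ : K} (hx : star x * x = c • 1) (hζ : (Algebra.lmul K A x).HasEigenvalue ζ) :
    c = star ζ * ζ := by
  obtain ⟨y, hy⟩ := hζ.exists_hasEigenvector
  have hxy : x * y = ζ • y := hy.apply_eq_smul
  have hyy : star y * y ≠ 0 := mt (hA y) hy.2
  refine smul_left_injective K hyy ?_
  calc c • (star y * y) = star y * (c • 1) * y := by simp
    _ = star (x * y) * (x * y) := by rw [← hx, star_mul]; simp only [mul_assoc]
    _ = (star ζ * ζ) • (star y * y) := by rw [hxy, star_smul, smul_mul_smul_comm]

theorem ProperInvolution.exists_smul_mem_unitary_pow_eq_one [IsAlgClosed K]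
    (hA : ProperInvolution A) {x : A} (hx₀ : x ≠ 0) {c : K} (hc : star x * x = c • 1) {n : ℕ}
    (hn : 0 < n) {a : K} (ha : x ^ n = a • 1) :
    ∃ b : K, b • x ∈ unitary A ∧ (b • x) ^ n = 1 := by
  have : Nontrivial A := nontrivial_of_ne x 0 hx₀
  obtain ⟨ζ, hζ⟩ := exists_hasEigenvalue_of_isIntegral
    ((isIntegral_of_pow_eq_smul_one hn ha).map (Algebra.lmul K A))
  obtain rfl := hA.eq_star_mul_self_of_hasEigenvalue hc hζ
  obtain rfl := eq_pow_of_hasEigenvalue ha hζ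
  have hζ₀ : ζ ≠ 0 := by
    rintro rfl
    exact hx₀ (hA x (by simpa using hc))
  have inv_smul_pow : (ζ⁻¹ • x) ^ n = 1 := by
    rw [smul_pow, ha, smul_smul, ← mul_pow, inv_mul_cancel₀ hζ₀, one_pow, one_smul]
  have star_inv_smul_mul : star (ζ⁻¹ • x) * (ζ⁻¹ • x) = 1 := by
    rw [star_smul, smul_mul_smul_comm, hc, smul_smul, mul_mul_mul_comm, ← star_mul',
      inv_mul_cancel₀ hζ₀, star_one, one_mul, one_smul]
  have isUnit_inv_smul : IsUnit (ζ⁻¹ • x) := .of_pow_eq_one inv_smul_pow hn.ne'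
  exact ⟨ζ⁻¹, isUnit_inv_smul.mem_unitary_of_star_mul_self star_inv_smul_mul, inv_smul_pow⟩

end ProperInvolution

section Grading

/-- A star-grading of `A` over `ι` with ergodic identity component: the degree-zero part consists
of the scalars only. The group is written additively, and the `𝒜 i` are not required to be
independent or to span `A`. -/
structure IsErgodicStarGrading {ι K A : Type*} [AddGroup ι] [CommSemiring K] [Semiring A]
    [StarRing A] [Algebra K A] (𝒜 : ι → Submodule K A) : Prop
    extends SetLike.GradedMonoid 𝒜 where
  zero_eq_span_one : 𝒜 0 = Submodule.span K {1}
  star_mem : ∀ {i : ι} {x : A}, x ∈ 𝒜 i → star x ∈ 𝒜 (-i)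

namespace IsErgodicStarGrading

section Semiring

variable {ι K A : Type*} [AddGroup ι] [CommSemiring K] [Semiring A] [StarRing A] [Algebra K A]
  {𝒜 : ι → Submodule K A}

theorem exists_eq_smul_one (h : IsErgodicStarGrading 𝒜) {x : A} (hx : x ∈ 𝒜 0) :
    ∃ c : K, x = c • 1 := by
  rw [h.zero_eq_span_one, Submodule.mem_span_singleton] at hx
  simpa only [eq_comm] using hx

theorem exists_star_mul_eq_smul_one (h : IsErgodicStarGrading 𝒜) {i : ι} {x y : A} (hx : x ∈ 𝒜 i)
    (hy : y ∈ 𝒜 i) : ∃ c : K, star x * y = c • 1 :=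
  h.exists_eq_smul_one (neg_add_cancel i ▸ h.mul_mem (h.star_mem hx) hy)

theorem eq_span_of_mem_unitary (h : IsErgodicStarGrading 𝒜) {i : ι} {u : A} (hu : u ∈ unitary A)
    (hui : u ∈ 𝒜 i) : 𝒜 i = Submodule.span K {u} := by
  refine le_antisymm (fun x hx => ?_) ((Submodule.span_singleton_le_iff_mem _ _).2 hui)
  obtain ⟨c, hc⟩ := h.exists_star_mul_eq_smul_one hui hx
  refine Submodule.mem_span_singleton.2 ⟨c, ?_⟩
  calc c • u = u * (star u * x) := by rw [hc, mul_smul_comm, mul_one]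
    _ = x := by rw [← mul_assoc, Unitary.mul_star_self_of_mem hu, one_mul]

end Semiring

variable {K A : Type*} [Field K] [IsAlgClosed K] [StarRing K] [Ring A] [StarRing A] [Algebra K A]
  [StarModule K A]

theorem exists_mem_unitary_pow_eq_one {ι : Type*} [AddGroup ι] {𝒜 : ι → Submodule K A}
    (h : IsErgodicStarGrading 𝒜) (hA : ProperInvolution A) {i : ι} (hi : 𝒜 i ≠ ⊥) {n : ℕ}
    (hn : 0 < n) (hni : n • i = 0) : ∃ u ∈ unitary A, u ∈ 𝒜 i ∧ u ^ n = 1 := by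
  have := h.toGradedMonoid
  obtain ⟨x, hx, hx₀⟩ := Submodule.exists_mem_ne_zero_of_ne_bot hi
  obtain ⟨c, hc⟩ := h.exists_star_mul_eq_smul_one hx hx
  obtain ⟨a, ha⟩ := h.exists_eq_smul_one (hni ▸ SetLike.pow_mem_graded n hx)
  obtain ⟨b, hb, hbn⟩ := hA.exists_smul_mem_unitary_pow_eq_one hx₀ hc hn ha
  exact ⟨b • x, hb, Submodule.smul_mem _ b hx, hbn⟩

theorem exists_mem_unitary_mem_one {n : ℕ} [NeZero n] {𝒜 : ZMod n → Submodule K A}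
    (h : IsErgodicStarGrading 𝒜) (hA : ProperInvolution A) {k : ZMod n} (hk : IsUnit k)
    (hne : 𝒜 k ≠ ⊥) : ∃ u ∈ unitary A, u ∈ 𝒜 1 ∧ u ^ n = 1 := by
  have := h.toGradedMonoid
  obtain ⟨v, hv, hvk, hvn⟩ := h.exists_mem_unitary_pow_eq_one hA hne (NeZero.pos n)
    (by rw [nsmul_eq_mul, ZMod.natCast_self, zero_mul])
  have val_inv_nsmul : (k⁻¹).val • k = 1 := by
    rw [nsmul_eq_mul, ZMod.natCast_zmod_val, mul_comm, ZMod.mul_inv_of_unit k hk]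
  refine ⟨v ^ (k⁻¹).val, pow_mem hv _, val_inv_nsmul ▸ SetLike.pow_mem_graded _ hvk, ?_⟩
  rw [pow_right_comm, hvn, one_pow]

end IsErgodicStarGrading

end Grading

section Span

theorem commute_of_iSup_span_pow_eq_top {ι R A : Type*} [CommSemiring R] [Semiring A]
    [Algebra R A] {u : A} {e : ι → ℕ} (h : ⨆ i, Submodule.span R {u ^ e i} = ⊤) (x y : A) :
    Commute x y := by
  have mem_adjoin (z : A) : z ∈ Algebra.adjoin R {u} := by
    have le_adjoin : ⨆ i, Submodule.span R {u ^ e i} ≤ (Algebra.adjoin R {u}).toSubmodule :=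
      iSup_le fun i => (Submodule.span_singleton_le_iff_mem _ _).2
        (pow_mem (Algebra.self_mem_adjoin_singleton R u) (e i))
    exact le_adjoin (h ▸ Submodule.mem_top)
  have commute_self (z : A) : Commute u z := Algebra.commute_of_mem_adjoin_self (mem_adjoin z)
  exact Algebra.commute_of_mem_adjoin_singleton_of_commute (mem_adjoin y) (commute_self x).symm

theorem finrank_eq_card_of_isInternal_span_singleton {ι K V : Type*} [Fintype ι] [DecidableEq ι]
    [DivisionRing K] [AddCommGroup V] [Module K V] {v : ι → V} (hv : ∀ i, v i ≠ 0)
    (h : DirectSum.IsInternal fun i => Submodule.span K {v i}) :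
    Module.finrank K V = Fintype.card ι := by
  rw [← (LinearEquiv.ofBijective (DirectSum.coeLinearMap _) h).finrank_eq,
    Module.finrank_directSum]
  simp [finrank_span_singleton (hv _)]

end Span

theorem stmt4_general {K A : Type*} [Field K] [IsAlgClosed K] [StarRing K] [Ring A] [StarRing A]
    [Algebra K A] [StarModule K A] (hA : ProperInvolution A) {n : ℕ} [NeZero n]
    {𝒜 : ZMod n → Submodule K A} (h𝒜 : IsErgodicStarGrading 𝒜)
    (h_internal : DirectSum.IsInternal 𝒜) {k : ZMod n} (hk : IsUnit k) (hne : 𝒜 k ≠ ⊥) :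
    ∃ u : A, u ∈ unitary A ∧ u ∈ 𝒜 1 ∧ u ^ n = 1 ∧
      (∀ k : ZMod n, 𝒜 k = Submodule.span K {u ^ k.val}) ∧
      (∀ x y : A, x * y = y * x) ∧
      Module.finrank K A = n := by
  have := h𝒜.toGradedMonoid
  obtain ⟨x, -, hx₀⟩ := Submodule.exists_mem_ne_zero_of_ne_bot hne
  have : Nontrivial A := nontrivial_of_ne x 0 hx₀
  obtain ⟨u, hu, hu₁, hun⟩ := h𝒜.exists_mem_unitary_mem_one hA hk hne
  have u_pow_mem (j : ZMod n) : u ^ j.val ∈ 𝒜 j := by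
    simpa using SetLike.pow_mem_graded j.val hu₁
  have u_pow_ne_zero (m : ℕ) : u ^ m ≠ 0 :=
    ((IsUnit.of_pow_eq_one hun (NeZero.ne n)).pow m).ne_zero
  have hspan (j : ZMod n) : 𝒜 j = Submodule.span K {u ^ j.val} :=
    h𝒜.eq_span_of_mem_unitary (pow_mem hu _) (u_pow_mem j)
  rw [funext hspan] at h_internal
  have hcomm (x y : A) : Commute x y :=
    commute_of_iSup_span_pow_eq_top h_internal.submodule_iSup_eq_top x y
  have hfinrank : Module.finrank K A = Fintype.card (ZMod n) :=
    finrank_eq_card_of_isInternal_span_singleton (fun j => u_pow_ne_zero j.val) h_internal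
  exact ⟨u, hu, hu₁, hun, hspan, hcomm, hfinrank.trans (ZMod.card n)⟩

/-- Let `p` be a prime and `A` a nontrivial finite-dimensional unital
C*-algebra over `ℂ`, equipped with an internal star-grading `(Ag k)_{k ∈ ℤ/pℤ}` over `ℤ/pℤ`
with ergodic identity component, such that `Ag k ≠ 0` for some `k ≠ 0`.  Then there is a
unitary `u ∈ Ag 1` with `u ^ p = 1` and `Ag k = ℂ · u^k` for every `k` (where `u^k` means
`u` raised to any representative of `k`, here `k.val`); in particular `A` is commutative of
`ℂ`-dimension `p`. -/
theorem stmt4 {A : Type*} [NormedRing A] [StarRing A] [CStarRing A]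
    [NormedAlgebra ℂ A] [StarModule ℂ A] [CompleteSpace A] [Nontrivial A]
    [FiniteDimensional ℂ A]
    (p : ℕ) (hp : p.Prime)
    (Ag : ZMod p → Submodule ℂ A)
    (h_internal : DirectSum.IsInternal Ag)
    (h_zero : Ag 0 = Submodule.span ℂ {(1 : A)})
    (h_mul : ∀ j k : ZMod p, ∀ x y : A, x ∈ Ag j → y ∈ Ag k → x * y ∈ Ag (j + k))
    (h_star : ∀ k : ZMod p, ∀ x : A, x ∈ Ag k → star x ∈ Ag (-k))
    (h_nt : ∃ k : ZMod p, k ≠ 0 ∧ Ag k ≠ ⊥) :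
    ∃ u : A, u ∈ unitary A ∧ u ∈ Ag 1 ∧ u ^ p = 1 ∧
      (∀ k : ZMod p, Ag k = Submodule.span ℂ {u ^ k.val}) ∧
      (∀ x y : A, x * y = y * x) ∧
      Module.finrank ℂ A = p := by
  have : Fact p.Prime := ⟨hp⟩
  obtain ⟨k, hk, hne⟩ := h_nt
  exact stmt4_general (properInvolution_of_cstarRing A)
    { one_mem := h_zero ▸ Submodule.mem_span_singleton_self 1
      mul_mem := fun {i j x y} => h_mul i j x y
      zero_eq_span_one := h_zero
      star_mem := fun {i x} => h_star i x } h_internal hk.isUnit hne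
end

section
/- Let A be a nontrivial unital C*-algebra over ℂ, finite-dimensional over ℂ, equipped with an internal star-grading (A_g)_{g ∈ S₃} over the symmetric group S₃ on three letters, with ergodic identity component. Then dim_ℂ A ∈ {1, 2, 3, 6}. -/
/-!
In a C*-algebra `star x * x ≠ 0` whenever `x ≠ 0`. If moreover `x` is homogeneous of degree `g`,
then `star x * x` is a scalar, so `x` is invertible with inverse of degree `g⁻¹`. Hence the degrees
that occur form a subgroup `H`, and multiplication by `x⁻¹` embeds the component of degree `g` into
the scalars, so that this component is the line through `x`. Choosing a nonzero vector in each
line gives a basis of the algebra indexed by `H`, and Lagrange's theorem applies to `H`.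
-/

open Submodule

theorem exists_basis_of_isInternal_span_singleton {ι R M : Type*} [DecidableEq ι] [Ring R]
    [IsDomain R] [AddCommGroup M] [Module R M] [Module.IsTorsionFree R M] {v : ι → M}
    (hv : ∀ i, v i ≠ 0) (h : DirectSum.IsInternal fun i ↦ R ∙ v i) :
    ∃ b : Module.Basis ι R M, ⇑b = v := by
  have hli : LinearIndependent R v :=
    h.submodule_iSupIndep.linearIndependent _ (fun i ↦ mem_span_singleton_self (v i)) hv
  have hspan : ⊤ ≤ span R (Set.range v) := by
    rw [span_range_eq_iSup, h.submodule_iSup_eq_top]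
  exact ⟨.mk hli hspan, Module.Basis.coe_mk hli hspan⟩

/-- A family of subspaces of an algebra that is multiplicative over a group, has the scalars as its
identity component, and is nondegenerate: no nonzero element of degree `g` is annihilated by left
multiplication by all elements of degree `g⁻¹`. In a star-grading of a C*-algebra, `star x` is the
witness of nondegeneracy at `x`. That the family decomposes the algebra is not included; it is
expressed separately by `DirectSum.IsInternal`. -/
structure IsNondegenerateErgodicGrading {G K A : Type*} [Group G] [Field K] [Ring A]
    [Algebra K A] (𝒜 : G → Submodule K A) : Prop where
  one_eq_span : 𝒜 1 = K ∙ (1 : A)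
  mul_mem : ∀ {g h : G} {x y : A}, x ∈ 𝒜 g → y ∈ 𝒜 h → x * y ∈ 𝒜 (g * h)
  exists_mul_ne_zero : ∀ {g : G} {x : A}, x ∈ 𝒜 g → x ≠ 0 → ∃ y ∈ 𝒜 g⁻¹, y * x ≠ 0

namespace IsNondegenerateErgodicGrading

variable {G K A : Type*} [Group G] [Field K] [Ring A] [Algebra K A] {𝒜 : G → Submodule K A}
  {g h : G} {x y : A}

theorem exists_smul_one_eq_mul (hA : IsNondegenerateErgodicGrading 𝒜) (hgh : g * h = 1)
    (hx : x ∈ 𝒜 g) (hy : y ∈ 𝒜 h) : ∃ c : K, c • (1 : A) = x * y := by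
  rw [← mem_span_singleton, ← hA.one_eq_span, ← hgh]
  exact hA.mul_mem hx hy

theorem exists_mul_eq_one (hA : IsNondegenerateErgodicGrading 𝒜) (hx : x ∈ 𝒜 g) (hx0 : x ≠ 0) :
    ∃ y ∈ 𝒜 g⁻¹, y * x = 1 ∧ x * y = 1 := by
  obtain ⟨z, hz, hzx⟩ := hA.exists_mul_ne_zero hx hx0
  obtain ⟨c, hc⟩ := hA.exists_smul_one_eq_mul (inv_mul_cancel g) hz hx
  have hc0 : c ≠ 0 := by
    rintro rfl
    exact hzx (by rw [← hc, zero_smul])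
  have hy : c⁻¹ • z ∈ 𝒜 g⁻¹ := smul_mem _ _ hz
  have hyx : c⁻¹ • z * x = 1 := by
    rw [smul_mul_assoc, ← hc, inv_smul_smul₀ hc0]
  -- A left inverse is two-sided here: `x * (c⁻¹ • z)` is a scalar that fixes `x`.
  obtain ⟨d, hd⟩ := hA.exists_smul_one_eq_mul (mul_inv_cancel g) hx hy
  have hdx : d • x = (1 : K) • x := by
    rw [← smul_one_mul d x, hd, mul_assoc, hyx, mul_one, one_smul]
  have hd1 : d = 1 := smul_left_injective K hx0 hdx
  exact ⟨c⁻¹ • z, hy, hyx, by rw [← hd, hd1, one_smul]⟩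

theorem eq_span_singleton (hA : IsNondegenerateErgodicGrading 𝒜) (hx : x ∈ 𝒜 g) (hx0 : x ≠ 0) :
    𝒜 g = K ∙ x := by
  refine le_antisymm (fun y hy ↦ ?_) ((span_singleton_le_iff_mem x _).2 hx)
  obtain ⟨z, hz, -, hxz⟩ := hA.exists_mul_eq_one hx hx0
  obtain ⟨c, hc⟩ := hA.exists_smul_one_eq_mul (inv_mul_cancel g) hz hy
  refine mem_span_singleton.2 ⟨c, ?_⟩
  calc c • x = x * (z * y) := by rw [← hc, mul_smul_one]
    _ = y := by rw [← mul_assoc, hxz, one_mul]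

variable [Nontrivial A]

/-- The set of degrees `g` with nonzero component `𝒜 g`; it is a subgroup because nonzero
homogeneous elements are invertible. -/
def support (hA : IsNondegenerateErgodicGrading 𝒜) : Subgroup G where
  carrier := {g | 𝒜 g ≠ ⊥}
  one_mem' := by
    rw [Set.mem_ofPred_eq, hA.one_eq_span, Ne, span_singleton_eq_bot]
    exact one_ne_zero
  mul_mem' := by
    intro g h hg hh
    obtain ⟨x, hx, hx0⟩ := exists_mem_ne_zero_of_ne_bot hg
    obtain ⟨y, hy, hy0⟩ := exists_mem_ne_zero_of_ne_bot hh
    obtain ⟨z, -, hzx, -⟩ := hA.exists_mul_eq_one hx hx0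
    refine (Submodule.ne_bot_iff _).2 ⟨x * y, hA.mul_mem hx hy, fun hxy ↦ hy0 ?_⟩
    rw [← one_mul y, ← hzx, mul_assoc, hxy, mul_zero]
  inv_mem' := by
    intro g hg
    obtain ⟨x, hx, hx0⟩ := exists_mem_ne_zero_of_ne_bot hg
    obtain ⟨y, hy, hyx, -⟩ := hA.exists_mul_eq_one hx hx0
    exact (Submodule.ne_bot_iff _).2 ⟨y, hy, left_ne_zero_of_mul_eq_one hyx⟩

end IsNondegenerateErgodicGrading

theorem natCard_subgroup_perm_fin_three_mem (H : Subgroup (Equiv.Perm (Fin 3))) :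
    Nat.card H ∈ ({1, 2, 3, 6} : Set ℕ) := by
  have hdvd : Nat.card H ∣ 6 := by
    simpa [Fintype.card_perm, Nat.factorial] using H.card_subgroup_dvd_card
  have hmem : Nat.card H ∈ Nat.divisors 6 := Nat.mem_divisors.2 ⟨hdvd, by decide⟩
  simpa [show Nat.divisors 6 = {1, 2, 3, 6} from rfl] using hmem

theorem stmt5_general {G K A : Type*} [Group G] [DecidableEq G] [Field K] [Ring A] [Nontrivial A]
    [Algebra K A] {𝒜 : G → Submodule K A} (hA : IsNondegenerateErgodicGrading 𝒜)
    (h_internal : DirectSum.IsInternal 𝒜) :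
    ∃ b : Module.Basis hA.support K A, ∀ g : hA.support, b g ∈ 𝒜 g := by
  have hne (g : hA.support) : ∃ x ∈ 𝒜 g, x ≠ 0 := exists_mem_ne_zero_of_ne_bot g.2
  choose v hv hv0 using hne
  have hline (g : hA.support) : 𝒜 g = K ∙ v g := hA.eq_span_singleton (hv g) (hv0 g)
  have h_support : DirectSum.IsInternal fun g : hA.support ↦ 𝒜 g :=
    DirectSum.isInternal_ne_bot_iff.2 h_internal
  simp only [hline] at h_support
  obtain ⟨b, rfl⟩ := exists_basis_of_isInternal_span_singleton hv0 h_support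
  exact ⟨b, hv⟩

/-- Let `A` be a nontrivial finite-dimensional unital C*-algebra over `ℂ`
equipped with an internal star-grading `(Ag g)_{g ∈ S₃}` over the symmetric group `S₃` on
three letters, with ergodic identity component.  Then `dim_ℂ A ∈ {1, 2, 3, 6}`. -/
theorem stmt5 {A : Type*} [NormedRing A] [StarRing A] [CStarRing A]
    [NormedAlgebra ℂ A] [StarModule ℂ A] [CompleteSpace A] [Nontrivial A]
    [FiniteDimensional ℂ A]
    (Ag : Equiv.Perm (Fin 3) → Submodule ℂ A)
    (h_internal : DirectSum.IsInternal Ag)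
    (h_one : Ag 1 = Submodule.span ℂ {(1 : A)})
    (h_mul : ∀ g h : Equiv.Perm (Fin 3), ∀ x y : A,
      x ∈ Ag g → y ∈ Ag h → x * y ∈ Ag (g * h))
    (h_star : ∀ g : Equiv.Perm (Fin 3), ∀ x : A, x ∈ Ag g → star x ∈ Ag g⁻¹) :
    Module.finrank ℂ A ∈ ({1, 2, 3, 6} : Set ℕ) := by
  have hA : IsNondegenerateErgodicGrading Ag :=
    ⟨h_one, h_mul _ _ _ _, fun {g x} hx hx0 ↦
      ⟨star x, h_star g x hx, (CStarRing.star_mul_self_ne_zero_iff x).2 hx0⟩⟩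
  obtain ⟨b, -⟩ := stmt5_general hA h_internal
  rw [Module.finrank_eq_nat_card_basis b]
  exact natCard_subgroup_perm_fin_three_mem hA.support
end

section
/- Let d₁, d₂, s, t, n₁, n₂ be natural numbers with d₁ ≥ 1 and d₂ ≥ 1 satisfying the three equations d₁² = 1 + s·d₁ + n₁·d₂, d₂² = 1 + n₂·d₁ + t·d₂, and d₁·d₂ = n₁·d₁ + n₂·d₂. Then either (d₁, d₂, s, t, n₁, n₂) = (2, 1, 1, 0, 1, 0) or (d₁, d₂, s, t, n₁, n₂) = (1, 2, 0, 1, 0, 1). In particular 1 + d₁² + d₂² = 6. -/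
/-!
The first equation makes `d₁` and `d₂` coprime. The third writes `d₁ d₂` as a combination of `d₁`
and `d₂` with natural coefficients, which for coprime numbers forces one of the coefficients to
vanish. If `n₁ = 0`, then `n₂ = d₁` and the system decouples: `d₁ ∣ 1` by the first equation, and
then `d₂ ∣ 2` by the second. The case `n₂ = 0` is symmetric.
-/

section

variable {a b m n p s t : ℕ}

lemma coprime_of_sq_eq_one_add_mul_add_mul (h : a ^ 2 = 1 + m * a + n * b) : a.Coprime b := by
  have hsq : a.gcd b ∣ 1 + (m * a + n * b) := by
    rw [← add_assoc, ← h]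
    exact dvd_pow (Nat.gcd_dvd_left a b) two_ne_zero
  have hcomb : a.gcd b ∣ m * a + n * b :=
    dvd_add ((Nat.gcd_dvd_left a b).mul_left m) ((Nat.gcd_dvd_right a b).mul_left n)
  exact Nat.dvd_one.1 ((Nat.dvd_add_left hcomb).1 hsq)

lemma mul_eq_mul_add_mul_iff_of_coprime (hab : a.Coprime b) (ha : a ≠ 0) (hb : b ≠ 0) :
    a * b = m * a + n * b ↔ (m = 0 ∧ n = a) ∨ (m = b ∧ n = 0) := by
  constructor
  · intro h
    have hmn : m = 0 ∨ n = 0 := by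
      by_contra! hne
      exact hab.mul_add_mul_ne_mul hne.1 hne.2 h.symm
    rcases hmn with rfl | rfl
    · rw [zero_mul, zero_add] at h
      exact .inl ⟨rfl, (Nat.mul_right_cancel (Nat.pos_of_ne_zero hb) h).symm⟩
    · rw [zero_mul, add_zero, mul_comm] at h
      exact .inr ⟨(Nat.mul_right_cancel (Nat.pos_of_ne_zero ha) h).symm, rfl⟩
  · rintro (⟨rfl, rfl⟩ | ⟨rfl, rfl⟩) <;> ring

lemma dvd_of_sq_eq_add_mul (h : a ^ 2 = n + s * a) : a ∣ n :=
  (Nat.dvd_add_left (dvd_mul_left a s)).1 (h ▸ dvd_pow_self a two_ne_zero)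

lemma sq_eq_one_add_mul_iff : a ^ 2 = 1 + s * a ↔ a = 1 ∧ s = 0 := by
  constructor
  · intro h
    obtain rfl : a = 1 := Nat.dvd_one.1 (dvd_of_sq_eq_add_mul h)
    exact ⟨rfl, by lia⟩
  · rintro ⟨rfl, rfl⟩
    rfl

lemma sq_eq_prime_add_mul_iff (hp : p.Prime) : b ^ 2 = p + t * b ↔ b = p ∧ t + 1 = p := by
  constructor
  · intro h
    rcases (Nat.dvd_prime hp).1 (dvd_of_sq_eq_add_mul h) with rfl | rfl
    · have := hp.two_le
      lia
    · exact ⟨rfl, Nat.mul_right_cancel hp.pos (by linarith)⟩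
  · rintro ⟨rfl, rfl⟩
    ring

end

/-- The fusion-rule Diophantine system: if `d₁, d₂ ≥ 1` and
`d₁² = 1 + s d₁ + n₁ d₂`, `d₂² = 1 + n₂ d₁ + t d₂`, `d₁ d₂ = n₁ d₁ + n₂ d₂`, then the only
solutions are `(2,1,1,0,1,0)` and `(1,2,0,1,0,1)`; in particular `1 + d₁² + d₂² = 6`. -/
theorem stmt6 (d₁ d₂ s t n₁ n₂ : ℕ) (hd₁ : 1 ≤ d₁) (hd₂ : 1 ≤ d₂)
    (h₁ : d₁ ^ 2 = 1 + s * d₁ + n₁ * d₂)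
    (h₂ : d₂ ^ 2 = 1 + n₂ * d₁ + t * d₂)
    (h₃ : d₁ * d₂ = n₁ * d₁ + n₂ * d₂) :
    ((d₁ = 2 ∧ d₂ = 1 ∧ s = 1 ∧ t = 0 ∧ n₁ = 1 ∧ n₂ = 0) ∨
      (d₁ = 1 ∧ d₂ = 2 ∧ s = 0 ∧ t = 1 ∧ n₁ = 0 ∧ n₂ = 1)) ∧
    1 + d₁ ^ 2 + d₂ ^ 2 = 6 := by
  have hcop : d₁.Coprime d₂ := coprime_of_sq_eq_one_add_mul_add_mul h₁
  have hn : (n₁ = 0 ∧ n₂ = d₁) ∨ (n₁ = d₂ ∧ n₂ = 0) :=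
    (mul_eq_mul_add_mul_iff_of_coprime hcop (Nat.ne_of_gt hd₁) (Nat.ne_of_gt hd₂)).1 h₃
  rcases hn with ⟨hn₁, hn₂⟩ | ⟨hn₁, hn₂⟩ <;> rw [hn₁] at h₁ <;> rw [hn₂] at h₂
  · obtain ⟨rfl, rfl⟩ : d₁ = 1 ∧ s = 0 := sq_eq_one_add_mul_iff.1 (by linarith)
    obtain ⟨rfl, ht⟩ : d₂ = 2 ∧ t + 1 = 2 :=
      (sq_eq_prime_add_mul_iff Nat.prime_two).1 (by linarith)
    lia
  · obtain ⟨rfl, rfl⟩ : d₂ = 1 ∧ t = 0 := sq_eq_one_add_mul_iff.1 (by linarith)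
    obtain ⟨rfl, hs⟩ : d₁ = 2 ∧ s + 1 = 2 :=
      (sq_eq_prime_add_mul_iff Nat.prime_two).1 (by linarith)
    lia
end
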